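/- arXiv:2012.11177 — 2 statements merged into one kernel-verified Lean document; each statement's English description precedes it below -/
import Mathlib

section
/- Let 1/2 < α < 1 and let G be a graph on n vertices with m edges and no isolated vertices. Then for every integer k with 1 ≤ k ≤ n−1, S_k(A_α(G)) ≤ 2αm − (n−k)·( det(A_α(G)) / ( λ_1(A_α(G))·λ_2(A_α(G))^{k−1} ) )^{1/(n−k)}, with equality if and only if λ_2(A_α(G)) = ⋯ = λ_k(A_α(G)) and λ_{k+1}(A_α(G)) = ⋯ = λ_n(A_α(G)). -/
open Matrix Finset Real

/-- The `A_α`-matrix of a graph: `A_α(G) = α·D(G) + (1−α)·A(G)`. -/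
noncomputable def Aalpha {n : ℕ} (α : ℝ) (G : SimpleGraph (Fin n)) [DecidableRel G.Adj] :
    Matrix (Fin n) (Fin n) ℝ :=
  α • Matrix.diagonal (fun i => (G.degree i : ℝ)) + (1 - α) • G.adjMatrix ℝ

/-- The sum of the `k` largest eigenvalues of a real symmetric matrix, expressed as
the supremum over all `k`-subsets of indices of the corresponding eigenvalue sums. -/
noncomputable def Sk {n : ℕ} (M : Matrix (Fin n) (Fin n) ℝ) (k : ℕ) : ℝ :=
  if h : M.IsHermitian then
    sSup {x : ℝ | ∃ s : Finset (Fin n), s.card = k ∧ x = ∑ i ∈ s, h.eigenvalues i}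
  else 0

/-- The `i`-th largest eigenvalue (1-indexed) of a real symmetric matrix,
obtained as the difference of consecutive partial sums of largest eigenvalues. -/
noncomputable def eig {n : ℕ} (M : Matrix (Fin n) (Fin n) ℝ) (i : ℕ) : ℝ :=
  Sk M i - Sk M (i - 1)

/-!
For `1/2 < α` the matrix `A_α` is strictly diagonally dominant, since `|1 - α| < α` and no vertex is
isolated, so it is positive definite by Gershgorin's theorem. Its trace is `2αm`, hence `S_k` is
`2αm` minus the tail `λ_{k+1} + ⋯ + λ_n`, which AM-GM bounds from below by `n - k` times the
geometric mean of its terms. The product of the tail is `det / (λ_1 λ_2 ⋯ λ_k)`, and replacing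
`λ_2, …, λ_k` by the larger `λ_2` only decreases it. Equality forces equality in both estimates.
-/

section ScalarInequality

variable {ι : Type*} {s : Finset ι}

section OrderedField

variable {K : Type*} [Field K] [LinearOrder K] [IsStrictOrderedRing K] {f : ι → K} {c : K}

theorem prod_div_pow_card_mem_Ioc (hf : ∀ i ∈ s, 0 < f i) (hfc : ∀ i ∈ s, f i ≤ c) :
    (∏ i ∈ s, f i) / c ^ #s ∈ Set.Ioc 0 1 := by
  have hprod : 0 < ∏ i ∈ s, f i := prod_pos hf
  have hle : ∏ i ∈ s, f i ≤ c ^ #s :=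
    (prod_le_prod (fun i hi ↦ (hf i hi).le) hfc).trans_eq (prod_const c)
  have hpow : 0 < c ^ #s := hprod.trans_le hle
  exact ⟨div_pos hprod hpow, div_le_one_of_le₀ hle hpow.le⟩

theorem prod_div_pow_card_eq_one_iff (hf : ∀ i ∈ s, 0 < f i) (hfc : ∀ i ∈ s, f i ≤ c) :
    (∏ i ∈ s, f i) / c ^ #s = 1 ↔ ∀ i ∈ s, f i = c := by
  have hpow : 0 < ∏ _i ∈ s, c := prod_pos fun i hi ↦ (hf i hi).trans_le (hfc i hi)
  rw [← prod_const, div_eq_one_iff_eq hpow.ne']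
  refine ⟨fun hprod ↦ ?_, prod_congr rfl⟩
  by_contra! ⟨i, hi, hne⟩
  exact (prod_lt_prod hf hfc ⟨i, hi, (hfc i hi).lt_of_ne hne⟩).ne hprod

end OrderedField

theorem card_mul_prod_rpow_inv_card_le_sum {f : ι → ℝ} (hs : s.Nonempty) (hf : ∀ i ∈ s, 0 ≤ f i) :
    #s * (∏ i ∈ s, f i) ^ (#s : ℝ)⁻¹ ≤ ∑ i ∈ s, f i := by
  have hcard : (0 : ℝ) < #s := by exact_mod_cast hs.card_pos
  have amgm := geom_mean_le_arith_mean s (fun _ ↦ 1) f (by simp) (by simpa using hcard) hf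
  simp only [rpow_one, one_mul, sum_const, nsmul_eq_mul, mul_one] at amgm
  rwa [le_div_iff₀' hcard] at amgm

theorem card_mul_prod_rpow_inv_card_eq_sum_iff {f : ι → ℝ} (hs : s.Nonempty)
    (hf : ∀ i ∈ s, 0 ≤ f i) :
    #s * (∏ i ∈ s, f i) ^ (#s : ℝ)⁻¹ = ∑ i ∈ s, f i ↔ ∀ i ∈ s, ∀ j ∈ s, f i = f j := by
  have hcard : (0 : ℝ) < #s := by exact_mod_cast hs.card_pos
  have amgm := geom_mean_eq_arith_mean_weighted_iff_of_pos s (fun _ ↦ (#s : ℝ)⁻¹) f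
    (fun _ _ ↦ inv_pos.2 hcard) (by simp [hcard.ne']) hf
  rwa [finsetProd_rpow _ _ hf, ← mul_sum, eq_inv_mul_iff_mul_eq₀ hcard.ne'] at amgm

theorem card_mul_rpow_inv_card_mul_prod_le_sum {f : ι → ℝ} {q : ℝ} (hs : s.Nonempty)
    (hq0 : 0 ≤ q) (hq1 : q ≤ 1) (hf : ∀ i ∈ s, 0 ≤ f i) :
    #s * (q * ∏ i ∈ s, f i) ^ (#s : ℝ)⁻¹ ≤ ∑ i ∈ s, f i := by
  have hprod : 0 ≤ ∏ i ∈ s, f i := prod_nonneg hf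
  calc #s * (q * ∏ i ∈ s, f i) ^ (#s : ℝ)⁻¹
      ≤ #s * (∏ i ∈ s, f i) ^ (#s : ℝ)⁻¹ := by gcongr; exact mul_le_of_le_one_left hprod hq1
    _ ≤ ∑ i ∈ s, f i := card_mul_prod_rpow_inv_card_le_sum hs hf

theorem card_mul_rpow_inv_card_mul_prod_eq_sum_iff {f : ι → ℝ} {q : ℝ} (hs : s.Nonempty)
    (hq0 : 0 ≤ q) (hq1 : q ≤ 1) (hf : ∀ i ∈ s, 0 < f i) :
    #s * (q * ∏ i ∈ s, f i) ^ (#s : ℝ)⁻¹ = ∑ i ∈ s, f i ↔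
      q = 1 ∧ ∀ i ∈ s, ∀ j ∈ s, f i = f j := by
  have hf' : ∀ i ∈ s, 0 ≤ f i := fun i hi ↦ (hf i hi).le
  rw [← card_mul_prod_rpow_inv_card_eq_sum_iff hs hf']
  refine ⟨fun heq ↦ ?_, fun ⟨hq, heq⟩ ↦ by rwa [hq, one_mul]⟩
  have hprod : 0 < ∏ i ∈ s, f i := prod_pos hf
  have hcard : (0 : ℝ) < #s := by exact_mod_cast hs.card_pos
  suffices hq : q = 1 from ⟨hq, by rwa [hq, one_mul] at heq⟩
  by_contra hq
  have hlt : #s * (q * ∏ i ∈ s, f i) ^ (#s : ℝ)⁻¹ < #s * (∏ i ∈ s, f i) ^ (#s : ℝ)⁻¹ := by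
    gcongr
    exact mul_lt_of_lt_one_left hprod (hq1.lt_of_ne hq)
  exact (hlt.trans_le (card_mul_prod_rpow_inv_card_le_sum hs hf')).ne heq

end ScalarInequality

section SortedEigenvalues

variable {n k i : ℕ} {M : Matrix (Fin n) (Fin n) ℝ}

theorem sum_le_sum_castLE_of_antitone {β : Type*} [AddCommMonoid β] [PartialOrder β]
    [IsOrderedAddMonoid β] {f : Fin n → β} (hf : Antitone f) {s : Finset (Fin n)} (hs : #s = k)
    (hk : k ≤ n) : ∑ i ∈ s, f i ≤ ∑ i : Fin k, f (Fin.castLE hk i) := by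
  have hle (i : Fin k) : Fin.castLE hk i ≤ s.orderEmbOfFin hs i := by
    have hcard : #(Iio i) ≤ #(Iio (s.orderEmbOfFin hs i)) :=
      card_le_card_of_injOn (s.orderEmbOfFin hs) (by simp [Set.MapsTo])
        (s.orderEmbOfFin hs).injective.injOn
    simpa [Fin.le_def] using hcard
  calc ∑ i ∈ s, f i = ∑ i : Fin k, f (s.orderEmbOfFin hs i) := by
        rw [← sum_coe_sort, ← (s.orderIsoOfFin hs).toEquiv.sum_comp]; rfl
    _ ≤ ∑ i : Fin k, f (Fin.castLE hk i) := sum_le_sum fun i _ ↦ hf (hle i)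

theorem Sk_eq_sum_eigenvalues₀ (hM : M.IsHermitian) (hk : k ≤ Fintype.card (Fin n)) :
    Sk M k = ∑ i : Fin k, hM.eigenvalues₀ (Fin.castLE hk i) := by
  let e : Fin (Fintype.card (Fin n)) ≃ Fin n := Fintype.equivOfCardEq (Fintype.card_fin _)
  have heig (i : Fin n) : hM.eigenvalues i = hM.eigenvalues₀ (e.symm i) := rfl
  rw [Sk, dif_pos hM]
  refine IsGreatest.csSup_eq ⟨⟨univ.map ((Fin.castLEEmb hk).trans e.toEmbedding), ?_, ?_⟩, ?_⟩
  · simp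
  · simp [heig]
  · rintro x ⟨s, hs, rfl⟩
    simpa [heig] using sum_le_sum_castLE_of_antitone hM.eigenvalues₀_antitone
      ((card_map e.symm.toEmbedding).trans hs) hk

theorem eig_succ_eq_eigenvalues₀ (hM : M.IsHermitian) (i : Fin (Fintype.card (Fin n))) :
    eig M (i + 1) = hM.eigenvalues₀ i := by
  rw [eig, Nat.add_sub_cancel, Sk_eq_sum_eigenvalues₀ hM i.is_lt,
    Sk_eq_sum_eigenvalues₀ hM i.is_le', Fin.sum_univ_castSucc]
  exact add_sub_cancel_left _ _

theorem antitoneOn_eig (hM : M.IsHermitian) : AntitoneOn (eig M) (Set.Ioc 0 n) := by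
  intro i ⟨hi, hin⟩ j ⟨hj, hjn⟩ hij
  obtain ⟨i, rfl⟩ := Nat.exists_eq_succ_of_ne_zero hi.ne'
  obtain ⟨j, rfl⟩ := Nat.exists_eq_succ_of_ne_zero hj.ne'
  have key := hM.eigenvalues₀_antitone (a := ⟨i, by simpa using hin⟩) (b := ⟨j, by simpa using hjn⟩)
    (by simpa using hij)
  simpa only [← eig_succ_eq_eigenvalues₀] using key

theorem eig_le_eig_two (hM : M.IsHermitian) (hi : i ∈ Ioc 1 n) : eig M i ≤ eig M 2 := by
  obtain ⟨hi1, hin⟩ := mem_Ioc.1 hi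
  exact antitoneOn_eig hM ⟨two_pos, by lia⟩ ⟨by lia, hin⟩ hi1

theorem exists_perm_eigenvalues_eq_eig (hM : M.IsHermitian) :
    ∃ σ : Equiv.Perm (Fin n), ∀ i, hM.eigenvalues i = eig M (σ i + 1) :=
  ⟨(Fintype.equivOfCardEq (Fintype.card_fin _)).symm.trans (finCongr (Fintype.card_fin n)),
    fun _ ↦ (eig_succ_eq_eigenvalues₀ hM _).symm⟩

theorem eig_pos (hM : M.PosDef) (hi : i ∈ Ioc 0 n) : 0 < eig M i := by
  obtain ⟨σ, hσ⟩ := exists_perm_eigenvalues_eq_eig hM.isHermitian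
  obtain ⟨hi0, hin⟩ := mem_Ioc.1 hi
  have key := hM.eigenvalues_pos (σ.symm ⟨i - 1, by lia⟩)
  simpa [hσ, Nat.sub_add_cancel hi0] using key

@[to_additive]
theorem prod_Ioc_zero_eq_prod_fin {β : Type*} [CommMonoid β] (f : ℕ → β) (n : ℕ) :
    ∏ i ∈ Ioc 0 n, f i = ∏ i : Fin n, f (i + 1) := by
  rw [← Ico_add_one_add_one_eq_Ioc, ← prod_Ico_add', ← range_eq_Ico, prod_range]

theorem trace_eq_sum_eig (hM : M.IsHermitian) : M.trace = ∑ i ∈ Ioc 0 n, eig M i := by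
  obtain ⟨σ, hσ⟩ := exists_perm_eigenvalues_eq_eig hM
  rw [hM.trace_eq_sum_eigenvalues, sum_Ioc_zero_eq_sum_fin]
  simpa [hσ] using Equiv.sum_comp σ (fun i ↦ eig M (i + 1))

theorem det_eq_prod_eig (hM : M.IsHermitian) : M.det = ∏ i ∈ Ioc 0 n, eig M i := by
  obtain ⟨σ, hσ⟩ := exists_perm_eigenvalues_eq_eig hM
  rw [hM.det_eq_prod_eigenvalues, prod_Ioc_zero_eq_prod_fin]
  simpa [hσ] using Equiv.prod_comp σ (fun i ↦ eig M (i + 1))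

theorem Sk_eq_sum_eig (M : Matrix (Fin n) (Fin n) ℝ) (k : ℕ) : Sk M k = ∑ i ∈ Ioc 0 k, eig M i := by
  have hzero : Sk M 0 = 0 := by simp [Sk]
  induction k with
  | zero => simp [hzero]
  | succ k ih => rw [sum_Ioc_succ_top k.zero_le, ← ih, eig, Nat.add_sub_cancel, add_sub_cancel]

theorem Sk_add_sum_eig_eq_trace (hM : M.IsHermitian) (hk : k ≤ n) :
    Sk M k + ∑ i ∈ Ioc k n, eig M i = M.trace := by
  rw [Sk_eq_sum_eig, sum_Ioc_consecutive _ k.zero_le hk, trace_eq_sum_eig hM]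

theorem det_div_eig_one_mul_eig_two_pow (hM : M.PosDef) (hk1 : 1 ≤ k) (hkn : k ≤ n) :
    M.det / (eig M 1 * eig M 2 ^ (k - 1)) =
      (∏ i ∈ Ioc 1 k, eig M i) / eig M 2 ^ #(Ioc 1 k) * ∏ i ∈ Ioc k n, eig M i := by
  have hpos : 0 < eig M 1 := eig_pos hM (by simp; lia)
  rw [det_eq_prod_eig hM.isHermitian, ← prod_Ioc_consecutive _ k.zero_le hkn,
    ← prod_Ioc_consecutive _ zero_le_one hk1,
    show Ioc 0 1 = {1} from rfl, prod_singleton, Nat.card_Ioc]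
  field_simp

end SortedEigenvalues

section PosDef

variable {n k : ℕ} {M : Matrix (Fin n) (Fin n) ℝ}

theorem prod_eig_div_eig_two_pow_mem_Ioc (hM : M.PosDef) (hkn : k ≤ n) :
    (∏ i ∈ Ioc 1 k, eig M i) / eig M 2 ^ #(Ioc 1 k) ∈ Set.Ioc 0 1 :=
  prod_div_pow_card_mem_Ioc (fun _ hi ↦ eig_pos hM (Ioc_subset_Ioc zero_le_one hkn hi))
    fun _ hi ↦ eig_le_eig_two hM.isHermitian (Ioc_subset_Ioc_right hkn hi)

theorem prod_eig_div_eig_two_pow_eq_one_iff (hM : M.PosDef) (hkn : k ≤ n) :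
    (∏ i ∈ Ioc 1 k, eig M i) / eig M 2 ^ #(Ioc 1 k) = 1 ↔ ∀ i ∈ Ioc 1 k, eig M i = eig M 2 :=
  prod_div_pow_card_eq_one_iff (fun _ hi ↦ eig_pos hM (Ioc_subset_Ioc zero_le_one hkn hi))
    fun _ hi ↦ eig_le_eig_two hM.isHermitian (Ioc_subset_Ioc_right hkn hi)

theorem Sk_le_trace_sub (hM : M.PosDef) (hk1 : 1 ≤ k) (hkn : k < n) :
    Sk M k ≤ M.trace - ((n : ℝ) - k) *
      (M.det / (eig M 1 * eig M 2 ^ (k - 1))) ^ ((n : ℝ) - k)⁻¹ := by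
  have hcard : (n : ℝ) - k = #(Ioc k n) := by rw [Nat.card_Ioc, Nat.cast_sub hkn.le]
  have htail : ∀ i ∈ Ioc k n, 0 ≤ eig M i := fun i hi ↦
    (eig_pos hM (Ioc_subset_Ioc_left k.zero_le hi)).le
  obtain ⟨hq0, hq1⟩ := prod_eig_div_eig_two_pow_mem_Ioc hM hkn.le
  rw [hcard, det_div_eig_one_mul_eig_two_pow hM hk1 hkn.le,
    ← Sk_add_sum_eig_eq_trace hM.isHermitian hkn.le, le_sub_iff_add_le, add_le_add_iff_left]
  exact card_mul_rpow_inv_card_mul_prod_le_sum (nonempty_Ioc.2 hkn) hq0.le hq1 htail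

theorem Sk_eq_trace_sub_iff (hM : M.PosDef) (hk1 : 1 ≤ k) (hkn : k < n) :
    Sk M k = M.trace - ((n : ℝ) - k) *
      (M.det / (eig M 1 * eig M 2 ^ (k - 1))) ^ ((n : ℝ) - k)⁻¹ ↔
      (∀ i ∈ Ioc 1 k, eig M i = eig M 2) ∧ ∀ i ∈ Ioc k n, eig M i = eig M (k + 1) := by
  have hcard : (n : ℝ) - k = #(Ioc k n) := by rw [Nat.card_Ioc, Nat.cast_sub hkn.le]
  have htail : ∀ i ∈ Ioc k n, 0 < eig M i := fun i hi ↦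
    eig_pos hM (Ioc_subset_Ioc_left k.zero_le hi)
  obtain ⟨hq0, hq1⟩ := prod_eig_div_eig_two_pow_mem_Ioc hM hkn.le
  have hfirst : k + 1 ∈ Ioc k n := mem_Ioc.2 ⟨k.lt_succ_self, hkn⟩
  rw [hcard, det_div_eig_one_mul_eig_two_pow hM hk1 hkn.le,
    ← Sk_add_sum_eig_eq_trace hM.isHermitian hkn.le, eq_sub_iff_add_eq, add_right_inj,
    card_mul_rpow_inv_card_mul_prod_eq_sum_iff (nonempty_Ioc.2 hkn) hq0.le hq1 htail,
    prod_eig_div_eig_two_pow_eq_one_iff hM hkn.le]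
  exact and_congr_right' ⟨fun hconst i hi ↦ hconst i hi _ hfirst,
    fun hconst i hi j hj ↦ (hconst i hi).trans (hconst j hj).symm⟩

end PosDef

open scoped ComplexOrder in
theorem posDef_of_sum_row_lt_diag {ι 𝕜 : Type*} [Fintype ι] [DecidableEq ι] [RCLike 𝕜]
    {A : Matrix ι ι 𝕜} (hA : A.IsHermitian)
    (hdiag : ∀ i, ∑ j ∈ univ.erase i, ‖A i j‖ < RCLike.re (A i i)) : A.PosDef := by
  refine hA.posDef_iff_eigenvalues_pos.2 fun i ↦ ?_
  have hμ : Module.End.HasEigenvalue (toLin' A) (hA.eigenvalues i : 𝕜) := by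
    rw [Module.End.hasEigenvalue_iff_mem_spectrum, spectrum_toLin', hA.spectrum_eq_image_range]
    exact Set.mem_image_of_mem _ (Set.mem_range_self i)
  obtain ⟨v, hv⟩ := eigenvalue_mem_ball hμ
  rw [mem_closedBall_iff_norm'] at hv
  have hre := (RCLike.re_le_norm _).trans hv
  rw [map_sub, RCLike.ofReal_re] at hre
  linarith [hdiag v]

section Graph

variable {n : ℕ} (G : SimpleGraph (Fin n)) [DecidableRel G.Adj] (α : ℝ)

theorem isHermitian_Aalpha : (Aalpha α G).IsHermitian :=
  ((isHermitian_diagonal _).smul (.all α)).add ((G.isHermitian_adjMatrix ℝ).smul (.all (1 - α)))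

theorem trace_Aalpha : (Aalpha α G).trace = 2 * α * #G.edgeFinset := by
  have hdeg : ∑ v, (G.degree v : ℝ) = 2 * #G.edgeFinset := by
    exact_mod_cast G.sum_degrees_eq_twice_card_edges
  rw [Aalpha, trace_add, trace_smul, trace_smul, trace_diagonal, G.trace_adjMatrix ℝ, hdeg,
    smul_zero, add_zero, smul_eq_mul]
  ring

theorem Aalpha_apply_self (v : Fin n) : Aalpha α G v v = α * G.degree v := by
  simp [Aalpha]

theorem sum_erase_norm_Aalpha (v : Fin n) :
    ∑ w ∈ univ.erase v, ‖Aalpha α G v w‖ = |1 - α| * G.degree v := by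
  have hoff : ∀ w ∈ univ.erase v, ‖Aalpha α G v w‖ = |1 - α| * G.adjMatrix ℝ v w := by
    intro w hw
    have hvw : v ≠ w := (ne_of_mem_erase hw).symm
    by_cases hadj : G.Adj v w <;> simp [Aalpha, hvw, hadj]
  have hrow : ∑ w, G.adjMatrix ℝ v w = G.degree v := by
    simpa [mulVec, dotProduct] using G.adjMatrix_mulVec_const_apply (a := (1 : ℝ)) (v := v)
  rw [sum_congr rfl hoff, ← mul_sum, sum_erase _ (by simp), hrow]

variable {α}

theorem posDef_Aalpha (hα : 1 / 2 < α) (hdeg : ∀ v, 0 < G.degree v) : (Aalpha α G).PosDef := by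
  refine posDef_of_sum_row_lt_diag (isHermitian_Aalpha G α) fun v ↦ ?_
  have hlt : |1 - α| < α := abs_lt.2 ⟨by linarith, by linarith⟩
  have hv : (0 : ℝ) < G.degree v := by exact_mod_cast hdeg v
  rw [sum_erase_norm_Aalpha, Aalpha_apply_self, RCLike.re_to_real]
  gcongr

end Graph

theorem stmt4_general {n : ℕ} (G : SimpleGraph (Fin n)) [DecidableRel G.Adj]
    (α : ℝ) (hα0 : 1 / 2 < α)
    (hiso : ∀ v, 0 < G.degree v)
    (m : ℕ) (hm : G.edgeFinset.card = m)
    (k : ℕ) (hk1 : 1 ≤ k) (hkn : k ≤ n - 1) :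
    Sk (Aalpha α G) k ≤ 2 * α * m - ((n : ℝ) - k) *
        (((Aalpha α G).det / (eig (Aalpha α G) 1 * eig (Aalpha α G) 2 ^ (k - 1)))
          ^ (((n : ℝ) - k)⁻¹)) ∧
    (Sk (Aalpha α G) k = 2 * α * m - ((n : ℝ) - k) *
        (((Aalpha α G).det / (eig (Aalpha α G) 1 * eig (Aalpha α G) 2 ^ (k - 1)))
          ^ (((n : ℝ) - k)⁻¹)) ↔
      (∀ i, 2 ≤ i → i ≤ k → eig (Aalpha α G) i = eig (Aalpha α G) 2) ∧
      (∀ i, k + 1 ≤ i → i ≤ n → eig (Aalpha α G) i = eig (Aalpha α G) (k + 1))) := by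
  subst hm
  have hpos : (Aalpha α G).PosDef := posDef_Aalpha G hα0 hiso
  have hkn' : k < n := by lia
  rw [← trace_Aalpha]
  refine ⟨Sk_le_trace_sub hpos hk1 hkn', (Sk_eq_trace_sub_iff hpos hk1 hkn').trans ?_⟩
  simp only [mem_Ioc, and_imp, Nat.succ_le_iff]

theorem stmt4 {n : ℕ} (G : SimpleGraph (Fin n)) [DecidableRel G.Adj]
    (α : ℝ) (hα0 : 1 / 2 < α) (hα1 : α < 1)
    (hiso : ∀ v, 0 < G.degree v)
    (m : ℕ) (hm : G.edgeFinset.card = m)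
    (k : ℕ) (hk1 : 1 ≤ k) (hkn : k ≤ n - 1) :
    Sk (Aalpha α G) k ≤ 2 * α * m - ((n : ℝ) - k) *
        (((Aalpha α G).det / (eig (Aalpha α G) 1 * eig (Aalpha α G) 2 ^ (k - 1)))
          ^ (((n : ℝ) - k)⁻¹)) ∧
    (Sk (Aalpha α G) k = 2 * α * m - ((n : ℝ) - k) *
        (((Aalpha α G).det / (eig (Aalpha α G) 1 * eig (Aalpha α G) 2 ^ (k - 1)))
          ^ (((n : ℝ) - k)⁻¹)) ↔
      (∀ i, 2 ≤ i → i ≤ k → eig (Aalpha α G) i = eig (Aalpha α G) 2) ∧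
      (∀ i, k + 1 ≤ i → i ≤ n → eig (Aalpha α G) i = eig (Aalpha α G) (k + 1))) :=
  stmt4_general G α hα0 hiso m hm k hk1 hkn
end

section
/- Let T be a tree on n vertices with matching number β, and let 0 ≤ α < 1/2. Then: S_k(A_α(T)) ≤ α(n+2k−2) + (1−2α)√(k(n−1)) if 1 ≤ k ≤ β; S_k(A_α(T)) ≤ α(n+2k−2) + (1−2α)√(β(n−1)) if β < k ≤ n−β; and S_k(A_α(T)) ≤ α(n+2k−2) + (1−2α)√((n−k)(n−1)) if n−β < k ≤ n. -/
/-!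
Write `A_α = α Q + (1 - 2α) A` with `Q = D + A` the signless Laplacian. By Ky Fan's principle `S_k`
is subadditive on symmetric matrices, so it suffices to bound `S_k(Q)` and `S_k(A)`.

* Cauchy–Schwarz at each vertex gives `∑ (Qx)_v² / d_v ≤ 2 xᵀQx`. For a unit eigenvector `u` with
  eigenvalue `μ` this reads `μ ≤ 2 + ∑ (1 - 1/d_v) μ u_v²`. Summing over `k` eigenvectors, and
  enlarging the last sum to all of them, turns `∑ μ u_v²` into `Q_vv = d_v`, so that
  `S_k(Q) ≤ 2k + ∑ (d_v - 1) = 2k + 2m - n`, with `m` the number of edges.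
* The spectrum of a bipartite graph is symmetric, so the squares of its positive
  eigenvalues sum to `tr(A²) / 2 = m`. There are at most as many positive eigenvalues as vertices
  in a vertex cover, since the quadratic form of `A` vanishes on vectors supported off the cover;
  by Kőnig's theorem this is at most `β`. Cauchy–Schwarz then gives `S_k(A) ≤ √(min(k, β) m)`.
  As `tr A = 0`, the same sum is that of the negatives of the other `n - k` eigenvalues, which
  gives `√((n - k) m)`.
-/

open Matrix Finset Real

/-- The matching number of a graph: the largest number of pairwise disjoint edges. -/
noncomputable def matchingNumber {n : ℕ} (G : SimpleGraph (Fin n)) : ℕ :=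
  sSup {k | ∃ M : G.Subgraph, M.IsMatching ∧ M.edgeSet.ncard = k}

section SpectralTheory

open scoped InnerProductSpace

variable {ι : Type*} [Fintype ι] [DecidableEq ι] {M : Matrix ι ι ℝ}

theorem dotProduct_mulVec_eq_sum_eigenvalues_mul_sq (hM : M.IsHermitian)
    (x : EuclideanSpace ℝ ι) :
    x.ofLp ⬝ᵥ M *ᵥ x.ofLp = ∑ j, hM.eigenvalues j * ⟪hM.eigenvectorBasis j, x⟫_ℝ ^ 2 := by
  have inner_mulVec (j : ι) : ⟪hM.eigenvectorBasis j, WithLp.toLp 2 (M *ᵥ x.ofLp)⟫_ℝ =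
      hM.eigenvalues j * ⟪hM.eigenvectorBasis j, x⟫_ℝ := by
    have hMt : Mᵀ = M := by simpa using hM.eq
    simp only [EuclideanSpace.inner_eq_star_dotProduct, star_trivial]
    rw [dotProduct_comm, dotProduct_mulVec, ← mulVec_transpose, hMt, hM.mulVec_eigenvectorBasis,
      smul_dotProduct, smul_eq_mul, dotProduct_comm]
  calc x.ofLp ⬝ᵥ M *ᵥ x.ofLp
      = ⟪x, WithLp.toLp 2 (M *ᵥ x.ofLp)⟫_ℝ := by
        simp [EuclideanSpace.inner_eq_star_dotProduct, dotProduct_comm]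
    _ = ∑ j, ⟪x, hM.eigenvectorBasis j⟫_ℝ *
          ⟪hM.eigenvectorBasis j, WithLp.toLp 2 (M *ᵥ x.ofLp)⟫_ℝ :=
        (hM.eigenvectorBasis.sum_inner_mul_inner _ _).symm
    _ = _ := by
        refine sum_congr rfl fun j _ ↦ ?_
        rw [inner_mulVec, real_inner_comm]
        ring

theorem diag_apply_eq_sum_eigenvalues_mul_sq (hM : M.IsHermitian) (i : ι) :
    M i i = ∑ j, hM.eigenvalues j * hM.eigenvectorBasis j i ^ 2 := by
  simpa [EuclideanSpace.inner_single_right] using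
    dotProduct_mulVec_eq_sum_eigenvalues_mul_sq hM (EuclideanSpace.single i 1)

theorem eigenvalues_eq_dotProduct_mulVec (hM : M.IsHermitian) (j : ι) :
    hM.eigenvalues j =
      (hM.eigenvectorBasis j).ofLp ⬝ᵥ M *ᵥ (hM.eigenvectorBasis j).ofLp := by
  simpa using hM.eigenvalues_eq j

theorem sum_sq_eigenvectorBasis (hM : M.IsHermitian) (j : ι) :
    ∑ i, hM.eigenvectorBasis j i ^ 2 = 1 := by
  rw [← EuclideanSpace.real_norm_sq_eq, hM.eigenvectorBasis.norm_eq_one, one_pow]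

theorem sum_sq_eigenvalues_eq_trace_mul_self (hM : M.IsHermitian) :
    ∑ j, hM.eigenvalues j ^ 2 = (M * M).trace := by
  have mul_self_eq : M * M = Unitary.conjStarAlgAut ℝ _ hM.eigenvectorUnitary
      (diagonal fun j ↦ hM.eigenvalues j ^ 2) := by
    conv_lhs => rw [hM.spectral_theorem, ← map_mul, diagonal_mul_diagonal]
    simp [sq]
  rw [mul_self_eq, Unitary.conjStarAlgAut_apply, trace_mul_cycle]
  simp [trace_diagonal]

theorem charpoly_neg_eq_prod_eigenvalues (hM : M.IsHermitian) :
    (-M).charpoly = ∏ j, (Polynomial.X - Polynomial.C (-hM.eigenvalues j)) := by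
  conv_lhs =>
    rw [hM.spectral_theorem, ← map_neg, Unitary.conjStarAlgAut_apply, charpoly_mul_comm,
      ← mul_assoc]
  simp [charpoly_diagonal]

theorem sum_eigenvalues_neg_of_charpoly_neg_eq (hM : M.IsHermitian)
    (h : (-M).charpoly = M.charpoly) (f : ℝ → ℝ) :
    ∑ j, f (-hM.eigenvalues j) = ∑ j, f (hM.eigenvalues j) := by
  have roots_prod (a : ι → ℝ) :
      (∏ j, (Polynomial.X - Polynomial.C (a j))).roots = univ.val.map a := by
    rw [← Polynomial.roots_multiset_prod_X_sub_C (univ.val.map a), Multiset.map_map]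
    rfl
  have map_eq : univ.val.map (fun j ↦ -hM.eigenvalues j) = univ.val.map hM.eigenvalues := by
    rw [← roots_prod, ← roots_prod, ← charpoly_neg_eq_prod_eigenvalues, h, hM.charpoly_eq]
    rfl
  have := congrArg (fun m ↦ (m.map f).sum) map_eq
  rwa [Multiset.map_map, Multiset.map_map] at this

theorem two_mul_sum_sq_posPart_eigenvalues (hM : M.IsHermitian)
    (h : (-M).charpoly = M.charpoly) :
    2 * ∑ j, (hM.eigenvalues j)⁺ ^ 2 = (M * M).trace := by
  have sq_eq (a : ℝ) : a⁺ ^ 2 + (-a)⁺ ^ 2 = a ^ 2 := by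
    rcases le_total 0 a with ha | ha <;> simp [ha]
  rw [two_mul]
  nth_rw 2 [← sum_eigenvalues_neg_of_charpoly_neg_eq hM h fun a ↦ a⁺ ^ 2]
  rw [← sum_add_distrib, ← sum_sq_eigenvalues_eq_trace_mul_self hM]
  exact sum_congr rfl fun j _ ↦ sq_eq _

theorem card_pos_eigenvalues_le_finrank (hM : M.IsHermitian) {E : Type*} [AddCommGroup E]
    [Module ℝ E] [FiniteDimensional ℝ E] (L : (ι → ℝ) →ₗ[ℝ] E)
    (hL : ∀ x, L x = 0 → x ⬝ᵥ M *ᵥ x ≤ 0) :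
    #{j | 0 < hM.eigenvalues j} ≤ Module.finrank ℝ E := by
  let b := hM.eigenvectorBasis
  let nonposCoords : EuclideanSpace ℝ ι →ₗ[ℝ] ({j // ¬ 0 < hM.eigenvalues j} → ℝ) :=
    LinearMap.pi fun j ↦ innerₛₗ ℝ (b j)
  let Φ := (L ∘ₗ (WithLp.linearEquiv 2 ℝ (ι → ℝ)).toLinearMap).prod nonposCoords
  -- On the kernel of `Φ` the form is nonpositive by `hL` and positive definite by `nonposCoords`.
  have Φ_injective : Function.Injective Φ := by
    rw [← LinearMap.ker_eq_bot, LinearMap.ker_eq_bot']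
    intro x hx
    obtain ⟨hLx, hnonpos⟩ := Prod.ext_iff.1 hx
    have inner_eq_zero (j : ι) (hj : ¬ 0 < hM.eigenvalues j) : ⟪b j, x⟫_ℝ = 0 :=
      congrFun hnonpos ⟨j, hj⟩
    have terms_nonneg (j : ι) : 0 ≤ hM.eigenvalues j * ⟪b j, x⟫_ℝ ^ 2 := by
      by_cases hj : 0 < hM.eigenvalues j
      · positivity
      · simp [inner_eq_zero j hj]
    have sum_nonpos : ∑ j, hM.eigenvalues j * ⟪b j, x⟫_ℝ ^ 2 ≤ 0 :=
      (dotProduct_mulVec_eq_sum_eigenvalues_mul_sq hM x).symm.trans_le (hL _ hLx)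
    have terms_eq_zero := (sum_eq_zero_iff_of_nonneg fun j _ ↦ terms_nonneg j).1
      (sum_nonpos.antisymm (sum_nonneg fun j _ ↦ terms_nonneg j))
    refine InnerProductSpace.ext_inner_left_basis b.toBasis fun j ↦ ?_
    rw [b.coe_toBasis, inner_zero_right]
    by_cases hj : 0 < hM.eigenvalues j
    · simpa [hj.ne'] using terms_eq_zero j (mem_univ j)
    · exact inner_eq_zero j hj
  have hfinrank := LinearMap.finrank_le_finrank_of_injective Φ_injective
  have hcard := Fintype.card_subtype_compl fun j ↦ 0 < hM.eigenvalues j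
  have hle := Fintype.card_subtype_le fun j ↦ 0 < hM.eigenvalues j
  rw [finrank_euclideanSpace, Module.finrank_prod, Module.finrank_fintype_fun_eq_card] at hfinrank
  rw [Fintype.card_subtype (fun j ↦ 0 < hM.eigenvalues j)] at hcard hle
  lia

end SpectralTheory

section KyFan

open scoped InnerProductSpace

variable {ι : Type*} [Fintype ι] [DecidableEq ι]

theorem sq_inner_mem_doublyStochastic {E : Type*} [NormedAddCommGroup E]
    [InnerProductSpace ℝ E] (b b' : OrthonormalBasis ι ℝ E) :
    of (fun i j ↦ ⟪b j, b' i⟫_ℝ ^ 2) ∈ doublyStochastic ℝ ι := by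
  refine mem_doublyStochastic_iff_sum.2 ⟨fun i j ↦ sq_nonneg _, fun i ↦ ?_, fun j ↦ ?_⟩
  · simpa using b.sum_sq_norm_inner_right (b' i)
  · simpa using b'.sum_sq_norm_inner_left (b j)

theorem sum_mulVec_le_of_mem_doublyStochastic {P : Matrix ι ι ℝ} (hP : P ∈ doublyStochastic ℝ ι)
    {f : ι → ℝ} {s : Finset ι} {c : ℝ} (hc : ∀ t : Finset ι, #t = #s → ∑ i ∈ t, f i ≤ c) :
    ∑ i ∈ s, (P *ᵥ f) i ≤ c := by
  obtain ⟨w, w_nonneg, sum_w, rfl⟩ := exists_eq_sum_perm_of_mem_doublyStochastic hP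
  calc ∑ i ∈ s, ((∑ σ, w σ • σ.permMatrix ℝ) *ᵥ f) i
      = ∑ σ, w σ * ∑ i ∈ s.map σ.toEmbedding, f i := by
        simp only [sum_mulVec, smul_mulVec, permMatrix_mulVec, Finset.sum_apply, Pi.smul_apply,
          smul_eq_mul, Function.comp_apply, mul_sum, sum_map, Equiv.coe_toEmbedding]
        exact sum_comm
    _ ≤ ∑ σ, w σ * c := by
        gcongr with σ
        · exact w_nonneg σ
        · exact hc _ (card_map _)
    _ = c := by rw [← sum_mul, sum_w, one_mul]

variable {n k : ℕ} {M N : Matrix (Fin n) (Fin n) ℝ}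

theorem Sk_le (hM : M.IsHermitian) (hk : k ≤ n) {c : ℝ}
    (hc : ∀ s : Finset (Fin n), #s = k → ∑ i ∈ s, hM.eigenvalues i ≤ c) : Sk M k ≤ c := by
  obtain ⟨s, -, hs⟩ := exists_subset_card_eq (hk.trans_eq (card_fin n).symm)
  rw [Sk, dif_pos hM]
  refine csSup_le ⟨_, s, hs, rfl⟩ ?_
  rintro _ ⟨t, ht, rfl⟩
  exact hc t ht

theorem sum_eigenvalues_le_Sk (hM : M.IsHermitian) (s : Finset (Fin n)) :
    ∑ i ∈ s, hM.eigenvalues i ≤ Sk M #s := by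
  rw [Sk, dif_pos hM]
  refine le_csSup (Set.Finite.bddAbove ?_) ⟨s, rfl, rfl⟩
  refine (Set.finite_range fun t : Finset (Fin n) ↦ ∑ i ∈ t, hM.eigenvalues i).subset ?_
  rintro _ ⟨t, -, rfl⟩
  exact ⟨t, rfl⟩

theorem sum_dotProduct_mulVec_le_Sk (hM : M.IsHermitian)
    (b : OrthonormalBasis (Fin n) ℝ (EuclideanSpace ℝ (Fin n))) (s : Finset (Fin n)) :
    ∑ i ∈ s, (b i).ofLp ⬝ᵥ M *ᵥ (b i).ofLp ≤ Sk M #s := by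
  refine (sum_congr rfl fun i _ ↦ ?_).trans_le <| sum_mulVec_le_of_mem_doublyStochastic
    (sq_inner_mem_doublyStochastic hM.eigenvectorBasis b) (f := hM.eigenvalues) (s := s)
    fun t ht ↦ ht ▸ sum_eigenvalues_le_Sk hM t
  rw [dotProduct_mulVec_eq_sum_eigenvalues_mul_sq hM]
  exact sum_congr rfl fun j _ ↦ mul_comm _ _

theorem Sk_smul_add_smul_le (hM : M.IsHermitian) (hN : N.IsHermitian) {a b : ℝ} (ha : 0 ≤ a)
    (hb : 0 ≤ b) (hk : k ≤ n) : Sk (a • M + b • N) k ≤ a * Sk M k + b * Sk N k := by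
  have hMN : (a • M + b • N).IsHermitian :=
    (hM.smul (star_trivial a)).add (hN.smul (star_trivial b))
  refine Sk_le hMN hk ?_
  rintro s rfl
  calc ∑ i ∈ s, hMN.eigenvalues i
      = a * ∑ i ∈ s, (hMN.eigenvectorBasis i).ofLp ⬝ᵥ M *ᵥ (hMN.eigenvectorBasis i).ofLp +
        b * ∑ i ∈ s, (hMN.eigenvectorBasis i).ofLp ⬝ᵥ N *ᵥ (hMN.eigenvectorBasis i).ofLp := by
        simp only [eigenvalues_eq_dotProduct_mulVec, add_mulVec, smul_mulVec, dotProduct_add,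
          dotProduct_smul, smul_eq_mul, sum_add_distrib, mul_sum]
    _ ≤ a * Sk M #s + b * Sk N #s := by
        gcongr <;> exact sum_dotProduct_mulVec_le_Sk ‹_› _ _

end KyFan

section SignlessLaplacian

variable {V : Type*} [Fintype V] [DecidableEq V] (G : SimpleGraph V) [DecidableRel G.Adj]

/-- The signless Laplacian `Q = D + A` of a graph; the `A_α`-matrix is `α Q + (1 - 2α) A`. -/
def signlessLapMatrix : Matrix V V ℝ :=
  G.degMatrix ℝ + G.adjMatrix ℝ

theorem isHermitian_signlessLapMatrix : (signlessLapMatrix G).IsHermitian :=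
  (G.isHermitian_degMatrix ℝ).add (G.isHermitian_adjMatrix ℝ)

theorem signlessLapMatrix_apply_self (v : V) : signlessLapMatrix G v v = G.degree v := by
  simp [signlessLapMatrix, SimpleGraph.degMatrix]

theorem trace_signlessLapMatrix : (signlessLapMatrix G).trace = 2 * #G.edgeFinset := by
  simp only [trace, diag_apply, signlessLapMatrix_apply_self]
  exact_mod_cast G.sum_degrees_eq_twice_card_edges

theorem signlessLapMatrix_mulVec_apply (x : V → ℝ) (v : V) :
    (signlessLapMatrix G *ᵥ x) v = ∑ w ∈ G.neighborFinset v, (x v + x w) := by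
  simp [signlessLapMatrix, add_mulVec, SimpleGraph.degMatrix_mulVec_apply, sum_add_distrib]

theorem sum_sq_add_eq_two_mul_dotProduct_signlessLapMatrix (x : V → ℝ) :
    ∑ v, ∑ w ∈ G.neighborFinset v, (x v + x w) ^ 2 = 2 * x ⬝ᵥ signlessLapMatrix G *ᵥ x := by
  have expand : x ⬝ᵥ signlessLapMatrix G *ᵥ x =
      ∑ v, ∑ w ∈ G.neighborFinset v, x v * (x v + x w) := by
    simp only [dotProduct, signlessLapMatrix_mulVec_apply, mul_sum]
  have expand_symm : x ⬝ᵥ signlessLapMatrix G *ᵥ x =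
      ∑ v, ∑ w ∈ G.neighborFinset v, x w * (x v + x w) := by
    simpa only [add_comm] using expand.trans (sum_comm' fun v w ↦ by simp [G.adj_comm])
  rw [two_mul]
  nth_rw 1 [expand]
  rw [expand_symm]
  simp only [← sum_add_distrib]
  refine sum_congr rfl fun v _ ↦ sum_congr rfl fun w _ ↦ ?_
  ring

theorem dotProduct_signlessLapMatrix_nonneg (x : V → ℝ) :
    0 ≤ x ⬝ᵥ signlessLapMatrix G *ᵥ x := by
  have := sum_sq_add_eq_two_mul_dotProduct_signlessLapMatrix G x
  have : 0 ≤ ∑ v, ∑ w ∈ G.neighborFinset v, (x v + x w) ^ 2 := by positivity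
  linarith

theorem eigenvalues_signlessLapMatrix_nonneg (j : V) :
    0 ≤ (isHermitian_signlessLapMatrix G).eigenvalues j := by
  rw [eigenvalues_eq_dotProduct_mulVec]
  exact dotProduct_signlessLapMatrix_nonneg G _

theorem sum_sq_signlessLapMatrix_mulVec_div_degree_le (x : V → ℝ) :
    ∑ v, (signlessLapMatrix G *ᵥ x) v ^ 2 / G.degree v ≤
      2 * x ⬝ᵥ signlessLapMatrix G *ᵥ x := by
  rw [← sum_sq_add_eq_two_mul_dotProduct_signlessLapMatrix]
  gcongr with v
  rw [signlessLapMatrix_mulVec_apply, ← G.card_neighborFinset_eq_degree]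
  exact div_le_of_le_mul₀ (by positivity) (by positivity)
    (sq_sum_le_card_mul_sum_sq.trans_eq (mul_comm _ _))

theorem eigenvalues_signlessLapMatrix_le (j : V) :
    (isHermitian_signlessLapMatrix G).eigenvalues j ≤
      2 + (isHermitian_signlessLapMatrix G).eigenvalues j *
        ∑ v, (1 - (G.degree v : ℝ)⁻¹) *
          (isHermitian_signlessLapMatrix G).eigenvectorBasis j v ^ 2 := by
  set hQ := isHermitian_signlessLapMatrix G
  set μ := hQ.eigenvalues j
  set u := hQ.eigenvectorBasis j
  have key : μ * (μ * ∑ v, (G.degree v : ℝ)⁻¹ * u v ^ 2) ≤ μ * 2 := by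
    calc μ * (μ * ∑ v, (G.degree v : ℝ)⁻¹ * u v ^ 2)
        = ∑ v, (signlessLapMatrix G *ᵥ u.ofLp) v ^ 2 / G.degree v := by
          rw [hQ.mulVec_eigenvectorBasis, mul_sum, mul_sum]
          refine sum_congr rfl fun v _ ↦ ?_
          rw [Pi.smul_apply, smul_eq_mul]
          ring
      _ ≤ 2 * u.ofLp ⬝ᵥ signlessLapMatrix G *ᵥ u.ofLp :=
          sum_sq_signlessLapMatrix_mulVec_div_degree_le G _
      _ = μ * 2 := by rw [← eigenvalues_eq_dotProduct_mulVec, mul_comm]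
  have le_two : μ * ∑ v, (G.degree v : ℝ)⁻¹ * u v ^ 2 ≤ 2 := by
    obtain hμ | hμ := (eigenvalues_signlessLapMatrix_nonneg G j).eq_or_lt
    · simp [μ, ← hμ]
    · exact le_of_mul_le_mul_left key hμ
  simp only [sub_mul, one_mul, sum_sub_distrib]
  rw [sum_sq_eigenvectorBasis]
  linarith

theorem sum_eigenvalues_signlessLapMatrix_le (s : Finset V) :
    ∑ j ∈ s, (isHermitian_signlessLapMatrix G).eigenvalues j ≤
      2 * #s + ∑ v, ((G.degree v - 1 : ℕ) : ℝ) := by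
  set hQ := isHermitian_signlessLapMatrix G
  have weight_nonneg (v : V) : 0 ≤ 1 - (G.degree v : ℝ)⁻¹ :=
    sub_nonneg.2 (Nat.cast_inv_le_one _)
  have weight_mul_degree (v : V) :
      (1 - (G.degree v : ℝ)⁻¹) * G.degree v = ((G.degree v - 1 : ℕ) : ℝ) := by
    obtain hv | hv := Nat.eq_zero_or_pos (G.degree v)
    · simp [hv]
    · rw [Nat.cast_pred hv]
      field_simp
  calc ∑ j ∈ s, hQ.eigenvalues j
      ≤ ∑ j ∈ s, (2 + hQ.eigenvalues j *
          ∑ v, (1 - (G.degree v : ℝ)⁻¹) * hQ.eigenvectorBasis j v ^ 2) :=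
        sum_le_sum fun j _ ↦ eigenvalues_signlessLapMatrix_le G j
    _ = 2 * #s + ∑ j ∈ s, hQ.eigenvalues j *
          ∑ v, (1 - (G.degree v : ℝ)⁻¹) * hQ.eigenvectorBasis j v ^ 2 := by
        rw [sum_add_distrib, sum_const, nsmul_eq_mul, mul_comm]
    _ ≤ 2 * #s + ∑ j, hQ.eigenvalues j *
          ∑ v, (1 - (G.degree v : ℝ)⁻¹) * hQ.eigenvectorBasis j v ^ 2 := by
        gcongr
        · exact fun j _ _ ↦ mul_nonneg (eigenvalues_signlessLapMatrix_nonneg G j)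
            (sum_nonneg fun v _ ↦ mul_nonneg (weight_nonneg v) (sq_nonneg _))
        · exact subset_univ s
    _ = 2 * #s + ∑ v, (1 - (G.degree v : ℝ)⁻¹) *
          ∑ j, hQ.eigenvalues j * hQ.eigenvectorBasis j v ^ 2 := by
        simp only [mul_sum, mul_left_comm]
        rw [sum_comm]
    _ = 2 * #s + ∑ v, ((G.degree v - 1 : ℕ) : ℝ) := by
        simp only [← diag_apply_eq_sum_eigenvalues_mul_sq, signlessLapMatrix_apply_self,
          weight_mul_degree]

theorem sum_eigenvalues_signlessLapMatrix_le_of_connected {G : SimpleGraph V}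
    [DecidableRel G.Adj] (hG : G.Connected) {s : Finset V} (hs : s.Nonempty) :
    ∑ j ∈ s, (isHermitian_signlessLapMatrix G).eigenvalues j ≤
      2 * #G.edgeFinset - Fintype.card V + 2 * #s := by
  obtain _ | _ := subsingleton_or_nontrivial V
  · have card_le_one : (Fintype.card V : ℝ) ≤ 1 :=
      mod_cast Fintype.card_le_one_iff_subsingleton.2 ‹_›
    have one_le_card : (1 : ℝ) ≤ #s := mod_cast hs.card_pos
    have le_trace : ∑ j ∈ s, (isHermitian_signlessLapMatrix G).eigenvalues j ≤
        2 * #G.edgeFinset := by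
      rw [← trace_signlessLapMatrix, (isHermitian_signlessLapMatrix G).trace_eq_sum_eigenvalues]
      exact sum_le_univ_sum_of_nonneg fun j ↦ eigenvalues_signlessLapMatrix_nonneg G j
    linarith
  · have sum_degree : ∑ v, (G.degree v : ℝ) = 2 * #G.edgeFinset :=
      mod_cast G.sum_degrees_eq_twice_card_edges
    have sum_degree_sub_one :
        ∑ v, ((G.degree v - 1 : ℕ) : ℝ) = 2 * #G.edgeFinset - Fintype.card V := by
      simp [Nat.cast_pred (hG.preconnected.degree_pos_of_nontrivial _), sum_degree]
    linarith [sum_eigenvalues_signlessLapMatrix_le G s]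

end SignlessLaplacian

section Adjacency

theorem sum_le_sqrt_card_pos_mul_sum_sq_posPart {ι : Type*} [Fintype ι] (s : Finset ι)
    (f : ι → ℝ) : ∑ i ∈ s, f i ≤ √(#{i ∈ s | 0 < f i} * ∑ i, (f i)⁺ ^ 2) := by
  calc ∑ i ∈ s, f i ≤ ∑ i ∈ s with 0 < f i, (f i)⁺ := by
        rw [sum_filter]
        gcongr with i
        split_ifs with hi
        · exact le_posPart _
        · exact not_lt.1 hi
    _ ≤ √(#{i ∈ s | 0 < f i} * ∑ i ∈ s with 0 < f i, (f i)⁺ ^ 2) :=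
        Real.le_sqrt_of_sq_le sq_sum_le_card_mul_sum_sq
    _ ≤ √(#{i ∈ s | 0 < f i} * ∑ i, (f i)⁺ ^ 2) := by
        gcongr
        exact subset_univ _

variable {V : Type*} [Fintype V] {G : SimpleGraph V} [DecidableRel G.Adj]

theorem trace_adjMatrix_mul_self :
    (G.adjMatrix ℝ * G.adjMatrix ℝ).trace = 2 * #G.edgeFinset := by
  simp only [trace, diag_apply, G.adjMatrix_mul_self_apply_self]
  exact_mod_cast G.sum_degrees_eq_twice_card_edges

variable [DecidableEq V]

theorem charpoly_neg_adjMatrix_of_isBipartite (hG : G.IsBipartite) :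
    (-G.adjMatrix ℝ).charpoly = (G.adjMatrix ℝ).charpoly := by
  obtain ⟨c⟩ := hG
  let S : Matrix V V ℝ := diagonal fun v ↦ if c v = 0 then 1 else -1
  have S_mul_S : S * S = 1 := by
    rw [diagonal_mul_diagonal, ← diagonal_one]
    congr! 2 with v
    split_ifs <;> norm_num
  have conj_eq_neg : S * G.adjMatrix ℝ * S = -G.adjMatrix ℝ := by
    ext v w
    rw [mul_diagonal, diagonal_mul, neg_apply, SimpleGraph.adjMatrix_apply]
    by_cases hvw : G.Adj v w
    · have := c.valid hvw
      have : c v = 0 ↔ c w ≠ 0 := by lia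
      by_cases hw : c w = 0 <;> simp_all
    · simp [hvw]
  rw [← conj_eq_neg, charpoly_mul_comm, ← mul_assoc, S_mul_S, one_mul]

theorem sum_sq_posPart_eigenvalues_adjMatrix (hG : G.IsBipartite) :
    ∑ j, ((G.isHermitian_adjMatrix ℝ).eigenvalues j)⁺ ^ 2 = #G.edgeFinset := by
  have := two_mul_sum_sq_posPart_eigenvalues (G.isHermitian_adjMatrix ℝ)
    (charpoly_neg_adjMatrix_of_isBipartite hG)
  rw [trace_adjMatrix_mul_self] at this
  linarith

theorem card_pos_eigenvalues_adjMatrix_le {C : Finset V} (hC : G.IsVertexCover C) :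
    #{j | 0 < (G.isHermitian_adjMatrix ℝ).eigenvalues j} ≤ #C := by
  refine (card_pos_eigenvalues_le_finrank _ (LinearMap.funLeft ℝ ℝ ((↑) : C → V))
    fun x hx ↦ le_of_eq ?_).trans_eq (by simp)
  have x_eq_zero (v : V) (hv : v ∈ C) : x v = 0 := congrFun hx ⟨v, hv⟩
  rw [SimpleGraph.dotProduct_mulVec_adjMatrix]
  refine sum_eq_zero fun v _ ↦ sum_eq_zero fun w _ ↦ ?_
  split_ifs with hvw
  · obtain hv | hw := hC hvw
    · rw [x_eq_zero v hv, zero_mul]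
    · rw [x_eq_zero w hw, mul_zero]
  · rfl

theorem sum_eigenvalues_adjMatrix_le (hG : G.IsBipartite) {C : Finset V}
    (hC : G.IsVertexCover C) (s : Finset V) :
    ∑ j ∈ s, (G.isHermitian_adjMatrix ℝ).eigenvalues j ≤
      √((min #s (min #C (Fintype.card V - #s)) : ℕ) * #G.edgeFinset) := by
  set hA := G.isHermitian_adjMatrix ℝ
  have sum_le_of_card_le {c : ℕ} (hc : #{j ∈ s | 0 < hA.eigenvalues j} ≤ c) :
      ∑ j ∈ s, hA.eigenvalues j ≤ √(c * #G.edgeFinset) := by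
    rw [← sum_sq_posPart_eigenvalues_adjMatrix hG]
    exact (sum_le_sqrt_card_pos_mul_sum_sq_posPart s _).trans (by gcongr)
  have sum_eq_compl : ∑ j ∈ s, hA.eigenvalues j = ∑ j ∈ sᶜ, -hA.eigenvalues j := by
    have trace_eq := hA.trace_eq_sum_eigenvalues.symm.trans (G.trace_adjMatrix ℝ)
    rw [sum_neg_distrib, eq_neg_iff_add_eq_zero, sum_add_sum_compl]
    exact trace_eq
  have sum_sq_posPart_neg : ∑ j, (-hA.eigenvalues j)⁺ ^ 2 = #G.edgeFinset := by
    rw [sum_eigenvalues_neg_of_charpoly_neg_eq hA (charpoly_neg_adjMatrix_of_isBipartite hG)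
      fun a ↦ a⁺ ^ 2, sum_sq_posPart_eigenvalues_adjMatrix hG]
  obtain h | h := min_choice #s (min #C (Fintype.card V - #s)) <;> rw [h]
  · exact sum_le_of_card_le (card_filter_le _ _)
  obtain h | h := min_choice #C (Fintype.card V - #s) <;> rw [h]
  · exact sum_le_of_card_le <|
      (card_le_card <| filter_subset_filter _ s.subset_univ).trans
        (card_pos_eigenvalues_adjMatrix_le hC)
  · rw [sum_eq_compl, ← card_compl, ← sum_sq_posPart_neg]
    refine (sum_le_sqrt_card_pos_mul_sum_sq_posPart _ _).trans ?_
    gcongr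
    exact filter_subset _ _

end Adjacency

section Konig

variable {V : Type*} {G : SimpleGraph V}

theorem exists_isMatching_card_le_ncard_edgeSet [Finite V] {C : Finset V} {f : C → V}
    (f_injective : Function.Injective f) (f_notMem : ∀ v, f v ∉ C)
    (adj_f : ∀ v : C, G.Adj v (f v)) :
    ∃ M : G.Subgraph, M.IsMatching ∧ #C ≤ M.edgeSet.ncard := by
  refine ⟨⨆ v, G.subgraphOfAdj (adj_f v), .iSup (fun v ↦ .subgraphOfAdj _) fun v w hvw ↦ ?_, ?_⟩
  · have hf : f v ≠ f w := f_injective.ne hvw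
    have hv : (v : V) ≠ f w := fun h ↦ f_notMem w (h ▸ v.2)
    have hw : f v ≠ w := fun h ↦ f_notMem v (h ▸ w.2)
    simp [SimpleGraph.support_subgraphOfAdj, Subtype.coe_ne_coe.2 hvw.symm, hf.symm, hv.symm,
      hw.symm]
  · have edge_injective : Function.Injective fun v : C ↦ s((v : V), f v) := by
      intro v w h
      obtain ⟨h, -⟩ | ⟨h, -⟩ := Sym2.eq_iff.1 h
      · exact Subtype.ext h
      · exact (f_notMem w (h ▸ v.2)).elim
    rw [← Nat.card_eq_finsetCard, ← Set.ncard_range_of_injective edge_injective]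
    refine Set.ncard_le_ncard ?_
    rintro _ ⟨v, rfl⟩
    simp only [SimpleGraph.Subgraph.edgeSet_iSup, Set.mem_iUnion]
    exact ⟨v, by simp⟩

section Hall

variable [Fintype V] [DecidableEq V] [DecidableRel G.Adj] {A C : Finset V}

theorem card_le_card_biUnion_neighborFinset_sdiff_of_isIndepSet (hC : G.IsVertexCover C)
    (hmin : ∀ C' : Finset V, G.IsVertexCover C' → #C ≤ #C') (hAC : A ⊆ C)
    (hA : G.IsIndepSet A) : #A ≤ #(A.biUnion fun v ↦ G.neighborFinset v \ C) := by
  -- Replacing `A` by its neighbours outside `C` must not yield a smaller cover.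
  set B := A.biUnion fun v ↦ G.neighborFinset v \ C
  have hcover : G.IsVertexCover (C \ A ∪ B : Finset V) := by
    have mem_of_adj {v w : V} (hvw : G.Adj v w) (hv : v ∈ C) :
        v ∈ C \ A ∪ B ∨ w ∈ C \ A ∪ B := by
      by_cases hvA : v ∈ A
      · have hwA : w ∉ A := fun hwA ↦ hA hvA hwA hvw.ne hvw
        by_cases hwC : w ∈ C
        · simp [hwC, hwA]
        · exact .inr (mem_union_right _ (mem_biUnion.2 ⟨v, hvA, by simp [hvw, hwC]⟩))
      · simp [hv, hvA]
    intro v w hvw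
    obtain hv | hw := hC hvw
    · exact mem_of_adj hvw hv
    · exact (mem_of_adj hvw.symm hw).symm
  have := (hmin _ hcover).trans (card_union_le _ _)
  have := card_sdiff_add_card_eq_card hAC
  lia

theorem card_le_card_biUnion_neighborFinset_sdiff_of_isBipartite (hG : G.IsBipartite)
    (hC : G.IsVertexCover C) (hmin : ∀ C' : Finset V, G.IsVertexCover C' → #C ≤ #C')
    (hAC : A ⊆ C) : #A ≤ #(A.biUnion fun v ↦ G.neighborFinset v \ C) := by
  obtain ⟨c⟩ := hG
  let side (i : Fin 2) : Finset V := {v ∈ A | c v = i}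
  let outer (i : Fin 2) : Finset V := (side i).biUnion fun v ↦ G.neighborFinset v \ C
  have card_side_le (i : Fin 2) : #(side i) ≤ #(outer i) := by
    refine card_le_card_biUnion_neighborFinset_sdiff_of_isIndepSet hC hmin
      ((filter_subset _ _).trans hAC) fun v hv w hw _ hvw ↦ c.valid hvw ?_
    rw [(mem_filter.1 hv).2, (mem_filter.1 hw).2]
  have color_of_mem_outer {i : Fin 2} {w : V} (hw : w ∈ outer i) : c w ≠ i := by
    obtain ⟨v, hv, hw⟩ := mem_biUnion.1 hw
    rw [mem_sdiff, G.mem_neighborFinset] at hw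
    rw [← (mem_filter.1 hv).2]
    exact (c.valid hw.1).symm
  have outer_disjoint : Set.PairwiseDisjoint (univ : Finset (Fin 2)) outer := by
    refine fun i _ j _ hij ↦ disjoint_left.2 fun w hwi hwj ↦ ?_
    have := color_of_mem_outer hwi
    have := color_of_mem_outer hwj
    lia
  calc #A = ∑ i, #(side i) := card_eq_sum_card_fiberwise fun _ _ ↦ mem_univ _
    _ ≤ ∑ i, #(outer i) := sum_le_sum fun i _ ↦ card_side_le i
    _ = #(univ.biUnion outer) := (card_biUnion outer_disjoint).symm
    _ ≤ #(A.biUnion fun v ↦ G.neighborFinset v \ C) := card_le_card <|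
        biUnion_subset.2 fun i _ ↦ biUnion_subset_biUnion_of_subset_left _ (filter_subset _ _)

end Hall

theorem exists_isVertexCover_isMatching_card_le [Finite V] (hG : G.IsBipartite) :
    ∃ (C : Finset V) (M : G.Subgraph),
      G.IsVertexCover C ∧ M.IsMatching ∧ #C ≤ M.edgeSet.ncard := by
  classical
  have := Fintype.ofFinite V
  obtain ⟨C, hC, hmin⟩ := exists_min_image ({C | G.IsVertexCover C} : Finset (Finset V)) card
    ⟨univ, by simp⟩
  simp only [mem_filter_univ] at hC hmin
  have hall (A : Finset C) : #A ≤ #(A.biUnion fun v ↦ G.neighborFinset v \ C) := by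
    have := card_le_card_biUnion_neighborFinset_sdiff_of_isBipartite hG hC hmin
      A.map_subtype_subset
    rwa [card_map, map_eq_image, image_biUnion] at this
  obtain ⟨f, f_injective, hf⟩ := (all_card_le_biUnion_card_iff_exists_injective _).1 hall
  simp only [mem_sdiff, SimpleGraph.mem_neighborFinset] at hf
  obtain ⟨M, hM, hCM⟩ := exists_isMatching_card_le_ncard_edgeSet f_injective
    (fun v ↦ (hf v).2) fun v ↦ (hf v).1
  exact ⟨C, M, hC, hM, hCM⟩

theorem ncard_edgeSet_le_matchingNumber {n : ℕ} {G : SimpleGraph (Fin n)} {M : G.Subgraph}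
    (hM : M.IsMatching) : M.edgeSet.ncard ≤ matchingNumber G := by
  refine le_csSup (Set.Finite.bddAbove ?_) ⟨M, hM, rfl⟩
  refine (Set.finite_range fun M : G.Subgraph ↦ M.edgeSet.ncard).subset ?_
  rintro _ ⟨M, -, rfl⟩
  exact ⟨M, rfl⟩

end Konig

section AalphaMatrix

variable {n k : ℕ} {α : ℝ} {G : SimpleGraph (Fin n)} [DecidableRel G.Adj]

theorem Aalpha_eq_smul_signlessLapMatrix_add_smul_adjMatrix :
    Aalpha α G = α • signlessLapMatrix G + (1 - 2 * α) • G.adjMatrix ℝ := by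
  rw [Aalpha, signlessLapMatrix, SimpleGraph.degMatrix]
  module

theorem Sk_signlessLapMatrix_le (hG : G.Connected) (hk1 : 1 ≤ k) (hkn : k ≤ n) :
    Sk (signlessLapMatrix G) k ≤ 2 * #G.edgeFinset - n + 2 * k := by
  refine Sk_le (isHermitian_signlessLapMatrix G) hkn ?_
  rintro s rfl
  simpa using sum_eigenvalues_signlessLapMatrix_le_of_connected hG (card_pos.1 hk1)

theorem Sk_adjMatrix_le (hG : G.IsBipartite) (hkn : k ≤ n) :
    Sk (G.adjMatrix ℝ) k ≤
      √((min k (min (matchingNumber G) (n - k)) : ℕ) * #G.edgeFinset) := by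
  obtain ⟨C, M, hC, hM, hCM⟩ := exists_isVertexCover_isMatching_card_le hG
  have card_C_le : #C ≤ matchingNumber G := hCM.trans (ncard_edgeSet_le_matchingNumber hM)
  refine Sk_le (G.isHermitian_adjMatrix ℝ) hkn ?_
  rintro s rfl
  refine (sum_eigenvalues_adjMatrix_le hG hC s).trans ?_
  rw [Fintype.card_fin]
  gcongr

theorem stmt7_general (hbip : G.IsBipartite) (hconn : G.Connected) (hα0 : 0 ≤ α)
    (hα1 : α ≤ 1 / 2) (hk1 : 1 ≤ k) (hkn : k ≤ n) :
    Sk (Aalpha α G) k ≤ α * (2 * #G.edgeFinset - n + 2 * k) +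
      (1 - 2 * α) * √((min k (min (matchingNumber G) (n - k)) : ℕ) * #G.edgeFinset) := by
  have one_sub_nonneg : 0 ≤ 1 - 2 * α := by linarith
  calc Sk (Aalpha α G) k
      ≤ α * Sk (signlessLapMatrix G) k + (1 - 2 * α) * Sk (G.adjMatrix ℝ) k := by
        rw [Aalpha_eq_smul_signlessLapMatrix_add_smul_adjMatrix]
        exact Sk_smul_add_smul_le (isHermitian_signlessLapMatrix G) (G.isHermitian_adjMatrix ℝ)
          hα0 one_sub_nonneg hkn
    _ ≤ α * (2 * #G.edgeFinset - n + 2 * k) + (1 - 2 * α) *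
          √((min k (min (matchingNumber G) (n - k)) : ℕ) * #G.edgeFinset) := by
        gcongr
        · exact Sk_signlessLapMatrix_le hconn hk1 hkn
        · exact Sk_adjMatrix_le hbip hkn

theorem Sk_Aalpha_le_of_isTree (hG : G.IsTree) (hα0 : 0 ≤ α) (hα1 : α ≤ 1 / 2) (hk1 : 1 ≤ k)
    (hkn : k ≤ n) {c : ℕ} (hc : min k (min (matchingNumber G) (n - k)) ≤ c) :
    Sk (Aalpha α G) k ≤ α * (n + 2 * k - 2) + (1 - 2 * α) * √(c * (n - 1)) := by
  have card_edges : (#G.edgeFinset : ℝ) = n - 1 := by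
    rw [eq_sub_iff_add_eq]
    exact_mod_cast hG.card_edgeFinset.trans (Fintype.card_fin n)
  have one_sub_nonneg : 0 ≤ 1 - 2 * α := by linarith
  calc Sk (Aalpha α G) k
      ≤ α * (2 * #G.edgeFinset - n + 2 * k) + (1 - 2 * α) *
          √((min k (min (matchingNumber G) (n - k)) : ℕ) * #G.edgeFinset) :=
        stmt7_general hG.isBipartite hG.connected hα0 hα1 hk1 hkn
    _ ≤ α * (2 * #G.edgeFinset - n + 2 * k) + (1 - 2 * α) * √(c * #G.edgeFinset) := by
        gcongr
    _ = α * (n + 2 * k - 2) + (1 - 2 * α) * √(c * (n - 1)) := by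
        rw [card_edges]
        ring

end AalphaMatrix

theorem stmt7 {n : ℕ} (T : SimpleGraph (Fin n)) [DecidableRel T.Adj] (hT : T.IsTree)
    (β : ℕ) (hβ : β = matchingNumber T)
    (α : ℝ) (hα0 : 0 ≤ α) (hα1 : α < 1 / 2)
    (k : ℕ) (hk1 : 1 ≤ k) (hkn : k ≤ n) :
    (k ≤ β → Sk (Aalpha α T) k ≤
      α * ((n : ℝ) + 2 * k - 2) + (1 - 2 * α) * Real.sqrt ((k : ℝ) * ((n : ℝ) - 1))) ∧
    (β < k → k ≤ n - β → Sk (Aalpha α T) k ≤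
      α * ((n : ℝ) + 2 * k - 2) + (1 - 2 * α) * Real.sqrt ((β : ℝ) * ((n : ℝ) - 1))) ∧
    (n - β < k → Sk (Aalpha α T) k ≤
      α * ((n : ℝ) + 2 * k - 2) + (1 - 2 * α) * Real.sqrt ((((n - k : ℕ)) : ℝ) * ((n : ℝ) - 1))) := by
  subst hβ
  exact ⟨fun _ ↦ Sk_Aalpha_le_of_isTree hT hα0 hα1.le hk1 hkn (by simp),
    fun _ _ ↦ Sk_Aalpha_le_of_isTree hT hα0 hα1.le hk1 hkn (by simp),
    fun _ ↦ Sk_Aalpha_le_of_isTree hT hα0 hα1.le hk1 hkn (by simp)⟩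
end
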